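/- For all homogeneous f, g ∈ Λ(n), the supercommutator of Hamiltonian vector fields satisfies [D_H(f), D_H(g)] = D_H(D_H(f)(g)). -/

import Mathlib

open scoped BigOperators

noncomputable section

namespace CartanSuper

/-- Coordinates of the exterior algebra `Λ(n)` with respect to the monomial basis
`{x_S : S ⊆ {1,…,n}}`. -/
abbrev Lambda (n : ℕ) := Finset (Fin n) → ℂ

/-- Endomorphism algebra of `Λ(n)`. -/
abbrev E (n : ℕ) := Module.End ℂ (Lambda n)

variable (n : ℕ)

/-- `(−1)^k`. -/
def msign (k : ℕ) : ℂ := (-1 : ℂ) ^ k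

/-- The basis monomial `x_S = x_{i₁}⋯x_{i_k}` (indices in increasing order). -/
def mono (S : Finset (Fin n)) : Lambda n := fun T => if T = S then 1 else 0

/-- Number of inversions between `S` and `T`. -/
def inversions (S T : Finset (Fin n)) : ℕ := ((S ×ˢ T).filter fun p => p.2 < p.1).card

/-- The multiplication of `Λ(n)` in coordinates:
`x_S · x_T = (−1)^{inversions} x_{S ∪ T}` for disjoint `S, T` and `0` otherwise. -/
def lmulFun (f g : Lambda n) : Lambda n :=
  fun U => ∑ S ∈ U.powerset, msign (inversions n S (U \ S)) * f S * g (U \ S)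

/-- Left multiplication by an element of `Λ(n)`, as a linear map `Λ(n) →ₗ End Λ(n)`. -/
def mulOp : Lambda n →ₗ[ℂ] E n where
  toFun f :=
    { toFun := lmulFun n f
      map_add' := by
        intro g h; funext U
        simp [lmulFun, mul_add, Finset.sum_add_distrib]
      map_smul' := by
        intro c g; funext U
        simp only [lmulFun, Pi.smul_apply, smul_eq_mul, RingHom.id_apply, Finset.mul_sum]
        exact Finset.sum_congr rfl (by intros; ring) }
  map_add' := by
    intro f g; apply LinearMap.ext; intro h; funext U
    show lmulFun n (f + g) h U = lmulFun n f h U + lmulFun n g h U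
    simp only [lmulFun]
    rw [← Finset.sum_add_distrib]
    exact Finset.sum_congr rfl (by intros; simp [Pi.add_apply]; ring)
  map_smul' := by
    intro c f; apply LinearMap.ext; intro h; funext U
    show lmulFun n (c • f) h U = (c • lmulFun n f h) U
    simp only [lmulFun, Pi.smul_apply, smul_eq_mul, Finset.mul_sum]
    exact Finset.sum_congr rfl (by intros; ring)

/-- The superderivation `∂_i` of `Λ(n)`, in coordinates. -/
def pd (i : Fin n) : E n where
  toFun f := fun S =>
    if i ∈ S then 0 else msign (S.filter (· < i)).card * f (insert i S)
  map_add' := by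
    intro f g; funext S; by_cases h : i ∈ S <;> simp [h, mul_add]
  map_smul' := by
    intro c f; funext S; by_cases h : i ∈ S <;> simp [h] <;> ring

/-- The parity operator `σ` of `Λ(n)`: `σ(x_S) = (−1)^{|S|} x_S`. -/
def par : E n where
  toFun f := fun S => msign S.card * f S
  map_add' := by intro f g; funext S; simp [mul_add]
  map_smul' := by intro c f; funext S; simp; ring

/-- The super-commutator `[D,F] = D∘F − (−1)^{|D||F|} F∘D`, extended bilinearly to all of
`End Λ(n)` using the parity operator `σ`
(for homogeneous `D`, `σ∘D∘σ = (−1)^{|D|} D`). -/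
def sbFun (D F : E n) : E n :=
  D * F - (2:ℂ)⁻¹ • ((F + par n * F * par n) * D + (F - par n * F * par n) * (par n * D * par n))

/-- The super-commutator as a bilinear map. -/
def sbL : E n →ₗ[ℂ] E n →ₗ[ℂ] E n :=
  LinearMap.mk₂ ℂ (sbFun n)
    (fun D D' F => by
      simp only [sbFun, add_mul, sub_mul, mul_add, mul_sub, smul_mul_assoc, mul_smul_comm,
        smul_add, smul_sub]
      module)
    (fun c D F => by
      simp only [sbFun, add_mul, sub_mul, mul_add, mul_sub, smul_mul_assoc, mul_smul_comm,
        smul_add, smul_sub]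
      module)
    (fun D F F' => by
      simp only [sbFun, add_mul, sub_mul, mul_add, mul_sub, smul_mul_assoc, mul_smul_comm,
        smul_add, smul_sub]
      module)
    (fun c D F => by
      simp only [sbFun, add_mul, sub_mul, mul_add, mul_sub, smul_mul_assoc, mul_smul_comm,
        smul_add, smul_sub]
      module)

/-- Shorthand for the super-commutator. -/
def sb (D F : E n) : E n := sbL n D F

/-- The ℤ₂-homogeneous component of `Λ(n)` of parity `p`. -/
def lpar (p : ZMod 2) : Submodule ℂ (Lambda n) where
  carrier := {f | ∀ S : Finset (Fin n), (S.card : ZMod 2) ≠ p → f S = 0}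
  add_mem' := by intro f g hf hg S hS; simp [Pi.add_apply, hf S hS, hg S hS]
  zero_mem' := by intro S hS; rfl
  smul_mem' := by intro c f hf S hS; simp [Pi.smul_apply, hf S hS]

/-- The ℤ-homogeneous component of `Λ(n)` of degree `m` (zero unless `0 ≤ m ≤ n`). -/
def ldeg (m : ℤ) : Submodule ℂ (Lambda n) where
  carrier := {f | ∀ S : Finset (Fin n), (S.card : ℤ) ≠ m → f S = 0}
  add_mem' := by intro f g hf hg S hS; simp [Pi.add_apply, hf S hS, hg S hS]
  zero_mem' := by intro S hS; rfl
  smul_mem' := by intro c f hf S hS; simp [Pi.smul_apply, hf S hS]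

/-- Endomorphisms of `Λ(n)` that are ℤ₂-homogeneous of parity `p`. -/
def epar (p : ZMod 2) : Submodule ℂ (E n) where
  carrier := {D | ∀ (q : ZMod 2), ∀ f ∈ lpar n q, D f ∈ lpar n (q + p)}
  add_mem' := by
    intro D F hD hF q f hf
    simpa [LinearMap.add_apply] using (lpar n (q + p)).add_mem (hD q f hf) (hF q f hf)
  zero_mem' := by intro q f hf; simpa using (lpar n (q + p)).zero_mem
  smul_mem' := by
    intro c D hD q f hf
    simpa [LinearMap.smul_apply] using (lpar n (q + p)).smul_mem c (hD q f hf)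

/-- Endomorphisms of `Λ(n)` that are ℤ-homogeneous of degree `d`. -/
def edeg (d : ℤ) : Submodule ℂ (E n) where
  carrier := {D | ∀ (m : ℤ), ∀ f ∈ ldeg n m, D f ∈ ldeg n (m + d)}
  add_mem' := by
    intro D F hD hF m f hf
    simpa [LinearMap.add_apply] using (ldeg n (m + d)).add_mem (hD m f hf) (hF m f hf)
  zero_mem' := by intro m f hf; simpa using (ldeg n (m + d)).zero_mem
  smul_mem' := by
    intro c D hD m f hf
    simpa [LinearMap.smul_apply] using (ldeg n (m + d)).smul_mem c (hD m f hf)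

/-- The linear map `(f₁,…,f_n) ↦ ∑ᵢ fᵢ ∂ᵢ`. -/
def Wmap : (Fin n → Lambda n) →ₗ[ℂ] E n where
  toFun F := ∑ i, mulOp n (F i) * pd n i
  map_add' := by
    intro F G
    simp only [Pi.add_apply, map_add, add_mul, Finset.sum_add_distrib]
  map_smul' := by
    intro c F
    simp only [RingHom.id_apply, Pi.smul_apply, map_smul, smul_mul_assoc, Finset.smul_sum]

/-- The divergence `(f₁,…,f_n) ↦ ∑ᵢ ∂ᵢ(fᵢ)`. -/
def divMap : (Fin n → Lambda n) →ₗ[ℂ] Lambda n where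
  toFun F := ∑ i, pd n i (F i)
  map_add' := by
    intro F G
    simp only [Pi.add_apply, map_add, Finset.sum_add_distrib]
  map_smul' := by
    intro c F
    simp only [RingHom.id_apply, Pi.smul_apply, map_smul, Finset.smul_sum]

/-- The Witt type Lie superalgebra `W(n) = {∑ fᵢ∂ᵢ : fᵢ ∈ Λ(n)}`. -/
def Wn : Submodule ℂ (E n) := LinearMap.range (Wmap n)

/-- Divergence-free coefficient tuples. -/
def divFree : Submodule ℂ (Fin n → Lambda n) := LinearMap.ker (divMap n)

/-- The special type Lie superalgebra `S(n) = {∑ fᵢ∂ᵢ : ∑ ∂ᵢ(fᵢ) = 0}`. -/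
def Sn : Submodule ℂ (E n) := (divFree n).map (Wmap n)

/-- The top monomial `ω = x₁x₂⋯x_n`. -/
def omegaTop : Lambda n := mono n Finset.univ

/-- `1 − x₁x₂⋯x_n`. -/
def oneM : Lambda n := mono n ∅ - omegaTop n

/-- Multiplication of every coefficient by `1 − x₁⋯x_n`. -/
def oneMScale : (Fin n → Lambda n) →ₗ[ℂ] (Fin n → Lambda n) :=
  LinearMap.pi fun i => (mulOp n (oneM n)) ∘ₗ LinearMap.proj i

/-- The Lie superalgebra `S̃(n) = {(1−x₁⋯x_n)∑ fᵢ∂ᵢ : ∑ ∂ᵢ(fᵢ) = 0}` (`n` even). -/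
def Stn : Submodule ℂ (E n) := (divFree n).map (Wmap n ∘ₗ oneMScale n)

/-- The conjugate index `i'`. -/
def cidx (i : Fin n) : Fin n :=
  ⟨if i.val < n / 2 then i.val + n / 2 else if i.val < 2 * (n / 2) then i.val - n / 2 else i.val,
   by have := i.isLt; split_ifs <;> omega⟩

/-- The linear map `f ↦ D_H(f) = (−1)^{|f|} ∑ᵢ ∂ᵢ(f)∂_{i'}` (the sign is implemented by the
parity operator `σ`, so that this is a single linear map agreeing with `D_H` on homogeneous
elements). -/
def DHmap : Lambda n →ₗ[ℂ] E n where
  toFun f := ∑ i, mulOp n (pd n i (par n f)) * pd n (cidx n i)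
  map_add' := by
    intro f g
    simp only [map_add, add_mul, Finset.sum_add_distrib]
  map_smul' := by
    intro c f
    simp only [RingHom.id_apply, map_smul, smul_mul_assoc, Finset.smul_sum]

/-- Evaluation of the top coefficient. -/
def evalTop : Lambda n →ₗ[ℂ] ℂ := LinearMap.proj Finset.univ

/-- The Hamiltonian Lie superalgebra `H(n) = {D_H(f) : f ∈ ⊕_{i=0}^{n−1} Λ(n)_i}`. -/
def Hn : Submodule ℂ (E n) := (LinearMap.ker (evalTop n)).map (DHmap n)

/-- `H̃(n) = {D_H(f) : f ∈ Λ(n)}`. -/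
def HtN : Submodule ℂ (E n) := LinearMap.range (DHmap n)

/-- The degree derivation `𝒞 = ∑ᵢ xᵢ∂ᵢ`. -/
def CC : E n := ∑ i, mulOp n (mono n {i}) * pd n i

/-- The span of the diagonal elements `xᵢ∂ᵢ`. -/
def diagSpan : Submodule ℂ (E n) :=
  Submodule.span ℂ (Set.range fun i : Fin n => mulOp n (mono n {i}) * pd n i)

/-- The four families of Cartan type Lie superalgebras. -/
inductive CT | W | S | St | H
deriving DecidableEq

/-- Validity of the parameter `n` for each family. -/
def CT.valid : CT → ℕ → Prop
  | .W, n => 4 ≤ n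
  | .S, n => 4 ≤ n
  | .St, n => 4 ≤ n ∧ Even n
  | .H, n => 4 < n

/-- The Cartan type Lie superalgebra `L` itself. -/
def CT.algebra : CT → (n : ℕ) → Submodule ℂ (E n)
  | .W, n => Wn n
  | .S, n => Sn n
  | .St, n => Stn n
  | .H, n => Hn n

/-- The extended algebra `L'`: `L' = L` for `W(n)` and `S̃(n)`, `L' = S(n) ⊕ ℂ𝒞` for `S(n)`,
and `L' = H̃(n) ⊕ ℂ𝒞` for `H(n)`. -/
def CT.prime : CT → (n : ℕ) → Submodule ℂ (E n)
  | .W, n => Wn n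
  | .S, n => Sn n ⊔ Submodule.span ℂ {CC n}
  | .St, n => Stn n
  | .H, n => HtN n ⊔ Submodule.span ℂ {CC n}

/-- The top degree `ξ_L` of the ℤ-grading. -/
def CT.xi : CT → (n : ℕ) → ℤ
  | .W, n => (n : ℤ) - 1
  | .S, n => (n : ℤ) - 2
  | .St, n => (n : ℤ) - 2
  | .H, n => (n : ℤ) - 3

/-- The ℤ-grading component `L_j = L ∩ W(n)_j`; for `S̃(n)` the component of degree `−1`
is `span{(1−x₁⋯x_n)∂ᵢ}` instead. -/
def CT.grade (t : CT) (n : ℕ) (j : ℤ) : Submodule ℂ (E n) :=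
  match t with
  | .St =>
      if j = -1 then
        Submodule.span ℂ (Set.range fun i : Fin n => mulOp n (oneM n) * pd n i)
      else Stn n ⊓ edeg n j
  | t => t.algebra n ⊓ edeg n j

/-- The ℤ-grading component `L'_j` of the extended algebra `L'`. -/
def CT.grade' (t : CT) (n : ℕ) (j : ℤ) : Submodule ℂ (E n) :=
  match t with
  | .St => CT.grade .St n j
  | t => t.prime n ⊓ edeg n j

/-- The standard Cartan subalgebra `H_L` of `L`: the part of the diagonal
`span{xᵢ∂ᵢ}` lying in `L`. -/
def CT.cartan (t : CT) (n : ℕ) : Submodule ℂ (E n) := t.algebra n ⊓ diagSpan n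

/-- The weight space of `M ⊆ End Λ(n)` of weight `μ ∈ H_L^*` under the adjoint action
of the standard Cartan subalgebra of `L`. -/
def wtsp (t : CT) (n : ℕ) (M : Submodule ℂ (E n)) (μ : Module.Dual ℂ (t.cartan n)) :
    Submodule ℂ (E n) where
  carrier := {x | x ∈ M ∧ ∀ h : t.cartan n, sbL n h x = μ h • x}
  add_mem' := by
    rintro x y ⟨hx, hx'⟩ ⟨hy, hy'⟩
    exact ⟨M.add_mem hx hy, fun h => by simp [map_add, hx' h, hy' h, smul_add]⟩
  zero_mem' := ⟨M.zero_mem, fun h => by simp⟩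
  smul_mem' := by
    rintro c x ⟨hx, hx'⟩
    exact ⟨M.smul_mem c hx, fun h => by simp [map_smul, hx' h, smul_comm c]⟩

/-- The set of roots of `M` with respect to the standard Cartan subalgebra of `L`:
the nonzero weights with nonzero weight space. -/
def CT.roots (t : CT) (n : ℕ) (M : Submodule ℂ (E n)) : Set (Module.Dual ℂ (t.cartan n)) :=
  {ε | ε ≠ 0 ∧ wtsp t n M ε ≠ ⊥}

/-- The sign `(−1)^p` for `p ∈ ℤ₂`. -/
def sgn (p : ZMod 2) : ℂ := (-1 : ℂ) ^ p.val

/-- `f` is a super-biderivation of `L` of ℤ₂-degree `pf`: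
a bilinear map with `f(L_α, L_β) ⊆ L_{α+β+pf}` satisfying
`f([x,y],z) = (−1)^{|x||f|}[x,f(y,z)] + (−1)^{|y||z|}[f(x,z),y]` and
`f(x,[y,z]) = [f(x,y),z] + (−1)^{(|f|+|x|)|y|}[y,f(x,z)]` for homogeneous `x,y,z ∈ L`.
(The bilinear map is given as a bilinear map on the ambient space `End Λ(n)`;
only its restriction to `L` is relevant.) -/
structure IsSuperBider (L : Submodule ℂ (E n)) (pf : ZMod 2)
    (f : E n →ₗ[ℂ] E n →ₗ[ℂ] E n) : Prop where
  maps : ∀ (α β : ZMod 2), ∀ x ∈ L ⊓ epar n α, ∀ y ∈ L ⊓ epar n β,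
    f x y ∈ L ⊓ epar n (α + β + pf)
  eq1 : ∀ (α β γ : ZMod 2), ∀ x ∈ L ⊓ epar n α, ∀ y ∈ L ⊓ epar n β, ∀ z ∈ L ⊓ epar n γ,
    f (sbL n x y) z = sgn (α * pf) • sbL n x (f y z) + sgn (β * γ) • sbL n (f x z) y
  eq2 : ∀ (α β γ : ZMod 2), ∀ x ∈ L ⊓ epar n α, ∀ y ∈ L ⊓ epar n β, ∀ z ∈ L ⊓ epar n γ,
    f x (sbL n y z) = sbL n (f x y) z + sgn ((pf + α) * β) • sbL n y (f x z)

/-- `D` is a superderivation of `L` of ℤ₂-degree `p`: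
`D(L_α) ⊆ L_{α+p}` and `D([x,y]) = [D(x),y] + (−1)^{|D||x|}[x,D(y)]` for homogeneous
`x, y ∈ L`. (Given as a linear map on the ambient space `End Λ(n)`.) -/
structure IsSuperDer (L : Submodule ℂ (E n)) (p : ZMod 2)
    (D : E n →ₗ[ℂ] E n) : Prop where
  maps : ∀ (α : ZMod 2), ∀ x ∈ L ⊓ epar n α, D x ∈ L ⊓ epar n (α + p)
  leib : ∀ (α β : ZMod 2), ∀ x ∈ L ⊓ epar n α, ∀ y ∈ L ⊓ epar n β,
    D (sbL n x y) = sbL n (D x) y + sgn (p * α) • sbL n x (D y)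

/-- `f ∈ BDer(L)_ε`: the super-biderivation `f` has weight `ε ∈ H_L^*`, i.e.
`f(L_η, L_ζ) ⊆ L_{ε+η+ζ}` for all weights `η, ζ`. -/
def CT.HasWeight (t : CT) (n : ℕ) (f : E n →ₗ[ℂ] E n →ₗ[ℂ] E n)
    (ε : Module.Dual ℂ (t.cartan n)) : Prop :=
  ∀ (η ζ : Module.Dual ℂ (t.cartan n)),
    ∀ x ∈ wtsp t n (t.algebra n) η, ∀ y ∈ wtsp t n (t.algebra n) ζ,
      f x y ∈ wtsp t n (t.algebra n) (ε + η + ζ)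

/-- `f ∈ BDer(L)_i`: the super-biderivation `f` has ℤ-degree `i`, i.e.
`f(L_j, L_k) ⊆ L_{i+j+k}` for all `j, k ∈ ℤ`. -/
def CT.HasDeg (t : CT) (n : ℕ) (f : E n →ₗ[ℂ] E n →ₗ[ℂ] E n) (i : ℤ) : Prop :=
  ∀ (j k : ℤ), ∀ x ∈ t.grade n j, ∀ y ∈ t.grade n k, f x y ∈ t.grade n (i + j + k)

theorem msign_add (a b : ℕ) : msign (a + b) = msign a * msign b := pow_add _ _ _

theorem msign_sq (a : ℕ) : msign a * msign a = 1 := by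
  unfold msign; rw [← mul_pow]; simp

theorem inv_eq (S T : Finset (Fin n)) :
    inversions n S T = ∑ s ∈ S, ∑ t ∈ T, if t < s then 1 else 0 := by
  rw [inversions, Finset.card_filter, Finset.sum_product]

theorem inv_union_left {S S' : Finset (Fin n)} (T : Finset (Fin n)) (h : Disjoint S S') :
    inversions n (S ∪ S') T = inversions n S T + inversions n S' T := by
  simp only [inv_eq, Finset.sum_union h]

theorem inv_union_right (S : Finset (Fin n)) {T T' : Finset (Fin n)} (h : Disjoint T T') :
    inversions n S (T ∪ T') = inversions n S T + inversions n S T' := by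
  simp only [inv_eq, Finset.sum_union h, Finset.sum_add_distrib]

theorem inv_single_left (i : Fin n) (T : Finset (Fin n)) :
    inversions n {i} T = (T.filter (· < i)).card := by
  simp [inv_eq]

theorem inv_swap {S T : Finset (Fin n)} (h : Disjoint S T) :
    inversions n S T + inversions n T S = S.card * T.card := by
  simp only [inv_eq]
  rw [Finset.sum_comm (s := T), ← Finset.sum_add_distrib, ← smul_eq_mul, ← Finset.sum_const]
  refine Finset.sum_congr rfl fun s hs => ?_
  rw [← Finset.sum_add_distrib, Finset.card_eq_sum_ones]
  refine Finset.sum_congr rfl fun t ht => ?_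
  have hne : s ≠ t := fun e => (Finset.disjoint_left.1 h hs) (e ▸ ht)
  rcases lt_or_gt_of_ne hne with h1 | h1
  · simp [h1, h1.le]
  · simp [h1, h1.le]

theorem mulOp_apply (f g : Lambda n) (U : Finset (Fin n)) :
    mulOp n f g U = ∑ S ∈ U.powerset, msign (inversions n S (U \ S)) * f S * g (U \ S) := rfl

theorem pd_apply (i : Fin n) (f : Lambda n) (S : Finset (Fin n)) :
    pd n i f S = if i ∈ S then 0 else msign (inversions n {i} S) * f (insert i S) := by
  rw [inv_single_left]; rfl

theorem par_apply (f : Lambda n) (S : Finset (Fin n)) :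
    par n f S = msign S.card * f S := rfl

theorem E_mul_neg (a b : E n) : a * -b = -(a * b) := by
  apply LinearMap.ext; intro f
  simp only [Module.End.mul_apply, LinearMap.neg_apply, map_neg]

theorem E_neg_mul (a b : E n) : -a * b = -(a * b) := by
  apply LinearMap.ext; intro f
  simp only [Module.End.mul_apply, LinearMap.neg_apply]

theorem par_par : par n * par n = 1 := by
  apply LinearMap.ext; intro f; funext S
  simp only [Module.End.mul_apply, par_apply, ← mul_assoc, msign_sq, one_mul, Module.End.one_apply]

theorem par_pd (i : Fin n) : par n * pd n i = - (pd n i * par n) := by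
  apply LinearMap.ext; intro f; funext S
  simp only [Module.End.mul_apply, LinearMap.neg_apply, Pi.neg_apply, par_apply, pd_apply]
  by_cases h : i ∈ S
  · simp [h]
  · simp only [h, if_false, Finset.card_insert_of_notMem h, not_false_eq_true]
    rw [msign_add]; simp [msign]; ring

theorem inv_insert_left {i : Fin n} {S : Finset (Fin n)} (T : Finset (Fin n)) (h : i ∉ S) :
    inversions n (insert i S) T = inversions n {i} T + inversions n S T := by
  rw [Finset.insert_eq, inv_union_left]; simpa using h

theorem inv_insert_right {i : Fin n} (S : Finset (Fin n)) {T : Finset (Fin n)} (h : i ∉ T) :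
    inversions n S (insert i T) = inversions n S {i} + inversions n S T := by
  rw [Finset.insert_eq, inv_union_right]; simpa using h

theorem pd_pd (i j : Fin n) : pd n i * pd n j = - (pd n j * pd n i) := by
  apply LinearMap.ext; intro f; funext S
  simp only [Module.End.mul_apply, LinearMap.neg_apply, Pi.neg_apply, pd_apply]
  by_cases hij : i = j
  · subst hij; simp
  by_cases h : i ∈ S
  · simp [h]
  by_cases h' : j ∈ S
  · simp [h']
  have hji : ¬ j = i := fun e => hij e.symm
  simp only [h, h', Finset.mem_insert, hij, hji, or_self, if_false]
  rw [inv_insert_right n _ h, inv_insert_right n _ h', Finset.insert_comm i j]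
  have hs := inv_swap n (S := {i}) (T := {j}) (by simpa using hij)
  have : msign (inversions n {i} {j}) * msign (inversions n {j} {i}) = -1 := by
    rw [← msign_add, hs]; simp [msign]
  have h2 := msign_sq (inversions n {j} {i})
  have h3 : msign (inversions n {i} {j}) = - msign (inversions n {j} {i}) := by
    linear_combination msign (inversions n {j} {i}) * this -
      msign (inversions n {i} {j}) * h2
  rw [msign_add, msign_add, h3]; ring

theorem par_mul (f : Lambda n) : par n * mulOp n f = mulOp n (par n f) * par n := by
  apply LinearMap.ext; intro g; funext U
  simp only [Module.End.mul_apply, par_apply, mulOp_apply, Finset.mul_sum]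
  refine Finset.sum_congr rfl fun S hS => ?_
  rw [← Finset.card_sdiff_add_card_eq_card (Finset.mem_powerset.1 hS), msign_add]; ring

theorem leib (i : Fin n) (f : Lambda n) :
    pd n i * mulOp n f = mulOp n (pd n i f) + mulOp n (par n f) * pd n i := by
  apply LinearMap.ext; intro g; funext U
  simp only [Module.End.mul_apply, LinearMap.add_apply, Pi.add_apply, par_apply]
  by_cases h : i ∈ U
  · obtain ⟨V, hV, rfl⟩ : ∃ V, i ∉ V ∧ insert i V = U :=
      ⟨U.erase i, by simp, Finset.insert_erase h⟩
    rw [pd_apply, if_pos h, mulOp_apply, mulOp_apply, Finset.sum_powerset_insert hV,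
      Finset.sum_powerset_insert hV, ← Finset.sum_add_distrib, ← Finset.sum_add_distrib,
      ← Finset.sum_add_distrib]
    symm
    refine Finset.sum_eq_zero fun S hS => ?_
    have hSV := Finset.mem_powerset.1 hS
    have hiS : i ∉ S := fun hh => hV (hSV hh)
    have e1 : insert i V \ S = insert i (V \ S) := Finset.insert_sdiff_of_notMem _ hiS
    have e2 : insert i V \ insert i S = V \ S := by
      ext x; simp only [Finset.mem_sdiff, Finset.mem_insert]
      by_cases hx : x = i
      · subst hx; simp [hV]
      · simp [hx]
    have hiVS : i ∉ V \ S := by simp [hV]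
    rw [e1, e2]
    simp only [pd_apply, par_apply, hiS, hiVS, Finset.mem_insert_self, if_true, if_false,
      mul_zero, zero_mul, add_zero, zero_add, inv_insert_right n S hiVS,
      inv_insert_left n (V \ S) hiS, Finset.card_insert_of_notMem hiS, msign_add]
    have hs := inv_swap n (S := {i}) (T := S) (by simpa using hiS)
    simp only [Finset.card_singleton, one_mul] at hs
    rw [← hs, msign_add]
    have h1 := msign_sq (inversions n {i} (V \ S))
    have h2 : msign 1 = -1 := by simp [msign]
    rw [h2]
    linear_combination (-msign (inversions n S {i}) * msign (inversions n {i} S) *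
      msign (inversions n S (V \ S)) * f (insert i S) * g (insert i (V \ S))) * h1
  · rw [pd_apply, if_neg h, mulOp_apply, mulOp_apply, mulOp_apply, Finset.sum_powerset_insert h,
      ← Finset.sum_add_distrib, ← Finset.sum_add_distrib, Finset.mul_sum]
    refine Finset.sum_congr rfl fun S hS => ?_
    have hSV := Finset.mem_powerset.1 hS
    have hiS : i ∉ S := fun hh => h (hSV hh)
    have e1 : insert i U \ S = insert i (U \ S) := Finset.insert_sdiff_of_notMem _ hiS
    have e2 : insert i U \ insert i S = U \ S := by
      ext x; simp only [Finset.mem_sdiff, Finset.mem_insert]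
      by_cases hx : x = i
      · subst hx; simp [h]
      · simp [hx]
    have hiVS : i ∉ U \ S := by simp [h]
    have e3 : inversions n {i} U = inversions n {i} S + inversions n {i} (U \ S) := by
      rw [← inv_union_right n _ Finset.disjoint_sdiff, Finset.union_sdiff_of_subset hSV]
    rw [e1, e2, e3]
    simp only [pd_apply, par_apply, hiS, hiVS, if_false, inv_insert_right n S hiVS,
      inv_insert_left n (U \ S) hiS, msign_add]
    have hs := inv_swap n (S := {i}) (T := S) (by simpa using hiS)
    simp only [Finset.card_singleton, one_mul] at hs
    rw [← hs, msign_add]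
    have h1 := msign_sq (inversions n {i} (U \ S))
    linear_combination (msign (inversions n {i} S) *
      msign (inversions n S (U \ S)) * f (insert i S) * g (U \ S)) * h1

theorem mulOp_assoc (f g : Lambda n) : mulOp n (mulOp n f g) = mulOp n f * mulOp n g := by
  apply LinearMap.ext; intro h; funext U
  simp only [Module.End.mul_apply, mulOp_apply, Finset.mul_sum, Finset.sum_mul]
  rw [Finset.sum_sigma', Finset.sum_sigma']
  refine Finset.sum_bij' (fun x _ => ⟨x.2, x.1 \ x.2⟩) (fun x _ => ⟨x.1 ∪ x.2, x.1⟩) ?_ ?_ ?_ ?_ ?_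
  · rintro ⟨S, T⟩ hx
    simp only [Finset.mem_sigma, Finset.mem_powerset] at hx ⊢
    exact ⟨hx.2.trans hx.1, Finset.sdiff_subset_sdiff hx.1 le_rfl⟩
  · rintro ⟨S, T⟩ hx
    simp only [Finset.mem_sigma, Finset.mem_powerset] at hx ⊢
    exact ⟨Finset.union_subset hx.1 (hx.2.trans Finset.sdiff_subset), Finset.subset_union_left⟩
  · rintro ⟨S, T⟩ hx
    simp only [Finset.mem_sigma, Finset.mem_powerset] at hx
    simp [Finset.union_sdiff_of_subset hx.2]
  · rintro ⟨S, T⟩ hx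
    simp only [Finset.mem_sigma, Finset.mem_powerset] at hx
    have hd : Disjoint S T := (Finset.disjoint_sdiff (s := S) (t := U)).mono_right hx.2
    simp [Finset.union_sdiff_cancel_left hd]
  · rintro ⟨S, T⟩ hx
    simp only [Finset.mem_sigma, Finset.mem_powerset] at hx
    obtain ⟨hS, hT⟩ := hx
    have e1 : (U \ T) \ (S \ T) = U \ S := by
      ext x; simp only [Finset.mem_sdiff]
      have := @hT x
      tauto
    have e2 : U \ T = (S \ T) ∪ (U \ S) := by
      ext x; simp only [Finset.mem_sdiff, Finset.mem_union]
      have := @hT x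
      have := @hS x
      tauto
    have d2 : Disjoint (S \ T) (U \ S) :=
      Finset.disjoint_sdiff.mono_left Finset.sdiff_subset
    have e3 : inversions n T (U \ T) = inversions n T (S \ T) + inversions n T (U \ S) := by
      rw [e2, inv_union_right n _ d2]
    have e4 : inversions n S (U \ S) = inversions n T (U \ S) + inversions n (S \ T) (U \ S) := by
      rw [← inv_union_left n _ Finset.disjoint_sdiff, Finset.union_sdiff_of_subset hT]
    simp only [e1, e3, e4, msign_add]
    ring

theorem msign_sgn (k : ℕ) : msign k = sgn (k : ZMod 2) := by
  unfold msign sgn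
  rw [ZMod.val_natCast, ← neg_one_pow_eq_pow_mod_two]

theorem mulOp_comm' {p q : ZMod 2} {f g : Lambda n} (hf : f ∈ lpar n p) (hg : g ∈ lpar n q) :
    mulOp n f g = sgn (p * q) • mulOp n g f := by
  funext U
  simp only [Pi.smul_apply, mulOp_apply, smul_eq_mul, Finset.mul_sum]
  refine Finset.sum_bij' (fun S _ => U \ S) (fun S _ => U \ S) ?_ ?_ ?_ ?_ ?_
  · intro S _; simp
  · intro S _; simp
  · intro S hS; simpa using hS
  · intro S hS; simpa using hS
  · intro S hS
    have e : U \ (U \ S) = S := by simpa using hS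
    rw [e]
    by_cases h1 : (S.card : ZMod 2) = p
    · by_cases h2 : ((U \ S).card : ZMod 2) = q
      · have hs := inv_swap n (S := S) (T := U \ S) Finset.disjoint_sdiff
        have h3 : sgn (p * q) = msign (inversions n S (U \ S)) * msign (inversions n (U \ S) S) := by
          rw [← msign_add, hs, msign_sgn, Nat.cast_mul, h1, h2]
        rw [h3]
        linear_combination (-msign (inversions n S (U \ S)) * f S * g (U \ S)) *
          msign_sq (inversions n (U \ S) S)
      · rw [hg _ h2]; simp
    · rw [hf _ h1]; simp

theorem mulOp_comm {p q : ZMod 2} {f g : Lambda n} (hf : f ∈ lpar n p) (hg : g ∈ lpar n q) :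
    mulOp n f * mulOp n g = sgn (p * q) • (mulOp n g * mulOp n f) := by
  rw [← mulOp_assoc, mulOp_comm' n hf hg, map_smul, mulOp_assoc]

theorem par_lpar {p : ZMod 2} {f : Lambda n} (hf : f ∈ lpar n p) : par n f = sgn p • f := by
  funext S
  simp only [par_apply, Pi.smul_apply, smul_eq_mul]
  by_cases h : (S.card : ZMod 2) = p
  · rw [msign_sgn, h]
  · rw [hf S h]; simp

theorem pd_lpar {p : ZMod 2} {f : Lambda n} (i : Fin n) (hf : f ∈ lpar n p) :
    pd n i f ∈ lpar n (p + 1) := by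
  intro S hS
  rw [pd_apply]
  split_ifs with h
  · rfl
  · rw [hf, mul_zero]
    rw [Finset.card_insert_of_notMem h]
    rintro rfl
    apply hS
    push_cast
    rw [add_assoc, show (1 + 1 : ZMod 2) = 0 from rfl, add_zero]

theorem mul_lpar {p q : ZMod 2} {f g : Lambda n} (hf : f ∈ lpar n p) (hg : g ∈ lpar n q) :
    mulOp n f g ∈ lpar n (p + q) := by
  intro U hU
  rw [mulOp_apply]
  refine Finset.sum_eq_zero fun S hS => ?_
  by_cases h1 : (S.card : ZMod 2) = p
  · by_cases h2 : ((U \ S).card : ZMod 2) = q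
    · exfalso; apply hU
      rw [← Finset.card_sdiff_add_card_eq_card (Finset.mem_powerset.1 hS), Nat.cast_add, h1, h2,
        add_comm]
    · rw [hg _ h2]; simp
  · rw [hf _ h1]; simp

theorem cidx_cidx (i : Fin n) : cidx n (cidx n i) = i := by
  have := i.isLt
  apply Fin.ext
  simp only [cidx]
  split_ifs <;> omega

/-- Unsigned Hamiltonian operator. -/
def DD (f : Lambda n) : E n := ∑ i, mulOp n (pd n i f) * pd n (cidx n i)

theorem DH_eq {p : ZMod 2} {f : Lambda n} (hf : f ∈ lpar n p) : DHmap n f = sgn p • DD n f := by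
  show ∑ i, mulOp n (pd n i (par n f)) * pd n (cidx n i) = _
  simp only [par_lpar n hf, map_smul, smul_mul_assoc, ← Finset.smul_sum, DD]

theorem zmod2_cases (p : ZMod 2) : p = 0 ∨ p = 1 := by
  fin_cases p
  · exact Or.inl rfl
  · exact Or.inr rfl

theorem sgn_zero : sgn 0 = 1 := by simp [sgn]
theorem sgn_one : sgn 1 = -1 := by simp [sgn, ZMod.val_one]
theorem sgn_add (p q : ZMod 2) : sgn (p + q) = sgn p * sgn q := by
  rcases zmod2_cases p with rfl | rfl <;> rcases zmod2_cases q with rfl | rfl <;>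
    simp [sgn_zero, sgn_one, show (1 + 1 : ZMod 2) = 0 from rfl]
theorem sgn_sq (p : ZMod 2) : sgn p * sgn p = 1 := by
  rcases zmod2_cases p with rfl | rfl <;> simp [sgn_zero, sgn_one]

theorem DD_par {p : ZMod 2} {f : Lambda n} (hf : f ∈ lpar n p) :
    par n * DD n f * par n = sgn p • DD n f := by
  have : par n * DD n f = sgn p • (DD n f * par n) := by
    simp only [DD, Finset.mul_sum, Finset.sum_mul, Finset.smul_sum]
    refine Finset.sum_congr rfl fun i _ => ?_
    rw [← mul_assoc, par_mul, par_lpar n (pd_lpar n i hf), mul_assoc, par_pd, sgn_add, sgn_one]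
    simp [mul_assoc, E_mul_neg, E_neg_mul]
  rw [this, smul_mul_assoc, mul_assoc, par_par, mul_one]

theorem DD_lpar {p q : ZMod 2} {f g : Lambda n} (hf : f ∈ lpar n p) (hg : g ∈ lpar n q) :
    DD n f g ∈ lpar n (p + q) := by
  simp only [DD, LinearMap.sum_apply, Module.End.mul_apply]
  refine Submodule.sum_mem _ fun i _ => ?_
  have := mul_lpar n (pd_lpar n i hf) (pd_lpar n (cidx n i) hg)
  have e : p + 1 + (q + 1) = p + q := by
    rw [add_add_add_comm, show (1 + 1 : ZMod 2) = 0 from rfl, add_zero]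
  rwa [e] at this

/-- Composition: first and second order parts. -/
theorem DD_mul {q : ZMod 2} (f : Lambda n) {g : Lambda n} (hg : g ∈ lpar n q) :
    DD n f * DD n g = ∑ j, mulOp n (DD n f (pd n j g)) * pd n (cidx n j) -
      sgn q • ∑ i, ∑ j, mulOp n (pd n i f) * mulOp n (pd n j g) *
        (pd n (cidx n i) * pd n (cidx n j)) := by
  have h1 : ∀ i j, mulOp n (pd n i f) * pd n (cidx n i) * (mulOp n (pd n j g) * pd n (cidx n j)) =
      mulOp n (mulOp n (pd n i f) (pd n (cidx n i) (pd n j g))) * pd n (cidx n j) -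
      sgn q • (mulOp n (pd n i f) * mulOp n (pd n j g) *
        (pd n (cidx n i) * pd n (cidx n j))) := by
    intro i j
    have := leib n (cidx n i) (pd n j g)
    rw [par_lpar n (pd_lpar n j hg), sgn_add, sgn_one] at this
    rw [mul_assoc, ← mul_assoc (pd n (cidx n i)), this, mulOp_assoc]
    simp [add_mul, mul_add, mul_assoc, sub_eq_add_neg, E_mul_neg, E_neg_mul]
  conv_lhs => simp only [DD, Finset.sum_mul, Finset.mul_sum]
  have h2 : ∀ j, mulOp n (DD n f (pd n j g)) * pd n (cidx n j) =
      ∑ i, mulOp n (mulOp n (pd n i f) (pd n (cidx n i) (pd n j g))) * pd n (cidx n j) := by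
    intro j
    simp only [DD, LinearMap.sum_apply, map_sum, Finset.sum_mul, Module.End.mul_apply]
  have h3 : ∑ j, mulOp n (DD n f (pd n j g)) * pd n (cidx n j) = ∑ i, ∑ j,
      mulOp n (mulOp n (pd n i f) (pd n (cidx n i) (pd n j g))) * pd n (cidx n j) := by
    rw [Finset.sum_comm]
    exact Finset.sum_congr rfl fun j _ => h2 j
  rw [h3]
  simp only [Finset.smul_sum]
  rw [Finset.sum_comm, ← Finset.sum_sub_distrib]
  refine Finset.sum_congr rfl fun i _ => ?_
  rw [← Finset.sum_sub_distrib]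
  refine Finset.sum_congr rfl fun j _ => ?_
  exact h1 i j

theorem DD_pd_eq {p q : ZMod 2} {f g : Lambda n} (hf : f ∈ lpar n p) (hg : g ∈ lpar n q)
    (j : Fin n) : DD n f (pd n j g) - sgn (p * q) • DD n g (pd n j f) =
      sgn p • pd n j (DD n f g) := by
  have hA : pd n j (DD n f g) = ∑ i, mulOp n (pd n j (pd n i f)) (pd n (cidx n i) g) +
      sgn p • DD n f (pd n j g) := by
    simp only [DD, LinearMap.sum_apply, map_sum, Finset.smul_sum, Module.End.mul_apply]
    rw [← Finset.sum_add_distrib]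
    refine Finset.sum_congr rfl fun i _ => ?_
    have h1 := LinearMap.congr_fun (leib n j (pd n i f)) (pd n (cidx n i) g)
    have h2 := LinearMap.congr_fun (pd_pd n j (cidx n i)) g
    rw [par_lpar n (pd_lpar n i hf), sgn_add, sgn_one] at h1
    simp only [Module.End.mul_apply, LinearMap.add_apply, LinearMap.neg_apply] at h1 h2
    rw [h1, h2]
    simp
  have hB : DD n g (pd n j f) = - (sgn (p * q) * sgn p) •
      ∑ i, mulOp n (pd n j (pd n i f)) (pd n (cidx n i) g) := by
    simp only [DD, LinearMap.sum_apply, Finset.smul_sum, Module.End.mul_apply]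
    refine Finset.sum_nbij' (cidx n) (cidx n) (by simp) (by simp)
      (fun i _ => cidx_cidx n i) (fun i _ => cidx_cidx n i) fun i _ => ?_
    have h2 := LinearMap.congr_fun (pd_pd n (cidx n i) j) f
    simp only [Module.End.mul_apply, LinearMap.neg_apply] at h2
    rw [cidx_cidx, h2, map_neg, mulOp_comm' n (pd_lpar n i hg)
      (pd_lpar n j (pd_lpar n (cidx n i) hf)), neg_smul]
    congr 2
    rcases zmod2_cases p with rfl | rfl <;> rcases zmod2_cases q with rfl | rfl <;>
      simp [sgn_zero, sgn_one, show (1 + 1 : ZMod 2) = 0 from rfl]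
  rw [hA, hB, smul_add, smul_smul, smul_smul, sgn_sq,
    show sgn (p * q) * -(sgn (p * q) * sgn p) = -(sgn (p*q) * sgn (p*q)) * sgn p by ring, sgn_sq]
  module

theorem DD_bracket {p q : ZMod 2} {f g : Lambda n} (hf : f ∈ lpar n p) (hg : g ∈ lpar n q) :
    DD n f * DD n g - sgn (p * q) • (DD n g * DD n f) = sgn p • DD n (DD n f g) := by
  have hR : sgn p • DD n (DD n f g) = ∑ j, mulOp n (DD n f (pd n j g)) * pd n (cidx n j) -
      sgn (p * q) • ∑ j, mulOp n (DD n g (pd n j f)) * pd n (cidx n j) := by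
    rw [DD, Finset.smul_sum, Finset.smul_sum, ← Finset.sum_sub_distrib]
    refine Finset.sum_congr rfl fun j _ => ?_
    rw [← smul_mul_assoc, ← map_smul, ← DD_pd_eq n hf hg, map_sub, map_smul, sub_mul,
      smul_mul_assoc]
  have hS : sgn q • ∑ i, ∑ j, mulOp n (pd n i f) * mulOp n (pd n j g) *
        (pd n (cidx n i) * pd n (cidx n j)) =
      sgn (p * q) • sgn p • ∑ i, ∑ j, mulOp n (pd n i g) * mulOp n (pd n j f) *
        (pd n (cidx n i) * pd n (cidx n j)) := by
    rw [Finset.sum_comm]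
    simp only [Finset.smul_sum]
    refine Finset.sum_congr rfl fun i _ => Finset.sum_congr rfl fun j _ => ?_
    rw [mulOp_comm n (pd_lpar n j hf) (pd_lpar n i hg), pd_pd n (cidx n j), smul_mul_assoc,
      E_mul_neg, smul_neg, smul_neg, smul_smul, smul_smul, ← neg_smul]
    congr 1
    rcases zmod2_cases p with rfl | rfl <;> rcases zmod2_cases q with rfl | rfl <;>
      simp [sgn_zero, sgn_one, show (1 + 1 : ZMod 2) = 0 from rfl]
  rw [DD_mul n f hg, DD_mul n g hf, hR, hS]
  module

/-- For all homogeneous `f, g ∈ Λ(n)`,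
`[D_H(f), D_H(g)] = D_H(D_H(f)(g))`. -/
theorem DH_bracket (n : ℕ) (p q : ZMod 2) (f g : Lambda n)
    (hf : f ∈ lpar n p) (hg : g ∈ lpar n q) :
    sbL n (DHmap n f) (DHmap n g) = DHmap n (DHmap n f g) := by
  rw [DH_eq n hf, DH_eq n hg, LinearMap.smul_apply, map_smul, DH_eq n ((lpar n _).smul_mem _ (DD_lpar n hf hg))]
  have hD : ∀ (c : ℂ) (x : Lambda n), DD n (c • x) = c • DD n x := by
    intro c x
    simp only [DD, map_smul, smul_mul_assoc, Finset.smul_sum]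
  have h : sbL n (DD n f) (DD n g) = sgn p • DD n (DD n f g) := by
    rw [← DD_bracket n hf hg]
    show sbFun n _ _ = _
    rw [sbFun, DD_par n hf, DD_par n hg]
    congr 1
    rcases zmod2_cases p with rfl | rfl <;> rcases zmod2_cases q with rfl | rfl <;>
      simp only [sgn_zero, sgn_one, mul_zero, zero_mul, mul_one, add_mul, sub_mul,
        smul_mul_assoc, mul_smul_comm] <;> module
  rw [LinearMap.map_smul, LinearMap.smul_apply, h, hD, sgn_add]
  simp only [smul_smul]
  congr 1
  ring

end CartanSuper
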